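/- arXiv:2405.03160 — 2 statements merged into one kernel-verified Lean document; each statement's English description precedes it below -/
import Mathlib

section
/- Let A = (a_ij) be an n×n dual quaternion Hermitian matrix. Then for every k = 1,…,n−1 and every dual quaternion α, Cdet(A_{n·}(α a_{k·})) = 0; that is, if the n-th row of A is replaced by the k-th row of A (possibly multiplied on the left by a dual quaternion α), the Chen determinant of the resulting matrix is zero. -/
/-!
Why the theorem holds. Write `D(S)` for the Chen determinant of the principal submatrix of `A` on an
index set `S` (`cdetOn`). Every permutation of `S` is the cycle of the largest index `m`, written
`m :: l` with `l` a repetition-free list, times a permutation of the remaining indices, so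
`D(S) = Σ_l (-1)^{|l|} a_{m l₁} ⋯ a_{l_r m} D(S \ {m} \ l)` (`cdetOn_expand`).

For Hermitian `A`, reversing `l` conjugates the path product, so by induction `D(S)` is fixed by
conjugation, that is, a dual number, hence central. Since `xy` and `yx` have equal real parts, the
same expansion holds along the cycle of any index `k ∈ S`, not only the largest: expanding at `k`
and at `m`, and splitting by whether the two indices share a cycle, gives sums that differ termwise
only in the order of two factors (`cdetOn_hermitian`).

With `N` the last index and row `N` replaced by `α a_k`, the expansion at `N` reads
`α Σ_l (-1)^{|l|} P(k,l,N) D(· \ l)`, where `P` is the path product (`pathProd`). Lists through `k`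
are `l = c ++ k :: d`, with `P(k,l,N) = P(k,c,k) P(k,d,N)` and sign `-(-1)^{|c|+|d|}`. For a list `d`
avoiding `k`, expanding the remaining central determinant along the cycle `k :: c` gives
the same term with the opposite sign, so everything cancels.
-/

/-!
Formalization background for "Moore Determinant of Dual Quaternion Hermitian Matrices"
(Cui, Qi, Song, Wang).

A dual quaternion is `q = q_s + q_d ε` with `q_s, q_d` quaternions, `ε² = 0`; it is modeled
by `DualNumber (Quaternion ℝ)`.
-/

open Quaternion Matrix

noncomputable section

/-- Dual quaternions: dual numbers over the quaternions. -/
abbrev DualQuaternion : Type := DualNumber (Quaternion ℝ)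

namespace DQPaper

/-- Conjugation of dual quaternions: `(q_s + q_d ε)* = q_s* + q_d* ε`. -/
instance : Star DualQuaternion := ⟨fun q => (star q.fst, star q.snd)⟩

/-- The real part of a dual quaternion `q = q_s + q_d ε`, as the dual number
`Re(q_s) + Re(q_d) ε`. -/
def dqRe (q : DualQuaternion) : DualNumber ℝ := (q.fst.re, q.snd.re)

/-- The embedding of the dual numbers into the dual quaternions. -/
def toDQ (d : DualNumber ℝ) : DualQuaternion := ((d.fst : ℍ[ℝ]), (d.snd : ℍ[ℝ]))

/-- A dual quaternion is a dual number if its standard and dual parts are both real. -/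
def IsDualNum (q : DualQuaternion) : Prop := ∃ d : DualNumber ℝ, q = toDQ d

/-- A dual number `a + b ε` is nonnegative if `a > 0`, or `a = 0` and `b ≥ 0`. -/
def DNNonneg (u : DualNumber ℝ) : Prop := 0 < u.fst ∨ (u.fst = 0 ∧ 0 ≤ u.snd)

/-- The order on dual numbers: `u ≤ v` iff `v - u` is nonnegative. -/
def dnLe (u v : DualNumber ℝ) : Prop := DNNonneg (v - u)

open Classical in
/-- The magnitude of a dual quaternion `p = p_s + p_d ε`, as a dual number:
`|p| = |p_s| + ((p_s* p_d + p_d* p_s)/(2|p_s|)) ε` if `p_s ≠ 0`, and `|p| = |p_d| ε`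
otherwise. -/
def dqMag (p : DualQuaternion) : DualNumber ℝ :=
  if p.fst = 0 then (0, ‖p.snd‖)
  else (‖p.fst‖, ((star p.fst * p.snd + star p.snd * p.fst).re) / (2 * ‖p.fst‖))

/-- The cycle of the permutation `σ` containing `i`, listed as `[i, σ i, σ² i, …]`. -/
def cycleList {n : ℕ} (σ : Equiv.Perm (Fin n)) (i : Fin n) : List (Fin n) :=
  i :: (((List.range n).map (fun k => (σ ^ (k + 1)) i)).takeWhile (fun j => decide (j ≠ i)))

/-- The leaders (largest element of each cycle) of `σ`, listed in decreasing order;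
this is the normalization used in the Chen determinant. -/
def chenLeaders {n : ℕ} (σ : Equiv.Perm (Fin n)) : List (Fin n) :=
  ((List.finRange n).filter (fun i => (cycleList σ i).all (fun j => decide (j ≤ i)))).reverse

/-- All of `Fin n` listed in the normalized cycle order of the Chen determinant:
each cycle is led by its largest element, and cycles are ordered by decreasing leaders
(so the first cycle contains the last index). -/
def chenOrder {n : ℕ} (σ : Equiv.Perm (Fin n)) : List (Fin n) :=
  ((chenLeaders σ).map (cycleList σ)).flatten

/-- The Chen determinant of a square matrix over a (possibly noncommutative) ring:
`Cdet A = Σ_σ (−1)^{n−r} a_σ`, where `σ` runs over all permutations written in the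
normalized cycle form with `r` disjoint cycles, and `a_σ` is the ordered product of the
entries `A i (σ i)` along the normalized cycle order. -/
def Cdet {n : ℕ} {R : Type*} [Ring R] (A : Matrix (Fin n) (Fin n) R) : R :=
  ∑ σ : Equiv.Perm (Fin n),
    (-1 : R) ^ (n - (chenLeaders σ).length) * ((chenOrder σ).map (fun i => A i (σ i))).prod

/-- The leaders (smallest element of each cycle) of `σ`, listed in decreasing order;
this is the normalization used in the Moore determinant. -/
def mooreLeaders {n : ℕ} (σ : Equiv.Perm (Fin n)) : List (Fin n) :=
  ((List.finRange n).filter (fun i => (cycleList σ i).all (fun j => decide (i ≤ j)))).reverse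

/-- All of `Fin n` listed in the normalized cycle order of the Moore determinant:
each cycle is led by its smallest element, and cycles are ordered by decreasing leaders. -/
def mooreOrder {n : ℕ} (σ : Equiv.Perm (Fin n)) : List (Fin n) :=
  ((mooreLeaders σ).map (cycleList σ)).flatten

/-- The Moore determinant of a square matrix over a (possibly noncommutative) ring:
`Mdet A = Σ_σ s(σ) a_σ`, where `s(σ)` is the sign of `σ` and `a_σ` is the ordered product
of the entries `A i (σ i)` along the normalized (Moore) cycle order. -/
def Mdet {n : ℕ} {R : Type*} [Ring R] (A : Matrix (Fin n) (Fin n) R) : R :=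
  ∑ σ : Equiv.Perm (Fin n),
    ((Equiv.Perm.sign σ : ℤ) : R) * ((mooreOrder σ).map (fun i => A i (σ i))).prod

/-- The switching matrix `P_{ij}`: the identity matrix with rows `i` and `j` interchanged. -/
def switchMatrix {R : Type*} [Ring R] {n : ℕ} (i j : Fin n) : Matrix (Fin n) (Fin n) R :=
  Matrix.of fun k l =>
    if (k = i ∧ l = j) ∨ (k = j ∧ l = i) ∨ (k = l ∧ k ≠ i ∧ k ≠ j) then 1 else 0

/-- The multiplication matrix `P_{i;c}`: the identity matrix with the `(i,i)` entry
replaced by `c`. -/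
def mulMatrix {R : Type*} [Ring R] {n : ℕ} (i : Fin n) (c : R) : Matrix (Fin n) (Fin n) R :=
  Matrix.of fun k l => if k = l then (if k = i then c else 1) else 0

/-- The addition matrix `P_{ij;c}`: the identity matrix with an extra entry `c` in
position `(j,i)`, so that `P_{ij;c} * A` adds `c` times row `i` of `A` to row `j`. -/
def addMatrix {R : Type*} [Ring R] {n : ℕ} (i j : Fin n) (c : R) : Matrix (Fin n) (Fin n) R :=
  Matrix.of fun k l => (if k = l then 1 else 0) + (if k = j ∧ l = i then c else 0)

/-- The product `A i₁ i₂ * A i₂ i₃ * ⋯ * A i_{m-1} i_m` of matrix entries along a chain of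
indices `[i₁, …, i_m]`; applied to a closed chain `[i₁, …, i_m, i₁]` it gives the cycle
product `⟨i₁ … i_m i₁⟩ = a_{i₁ i₂} ⋯ a_{i_m i₁}`. -/
def chainProd {n : ℕ} (A : Matrix (Fin n) (Fin n) DualQuaternion) :
    List (Fin n) → DualQuaternion
  | [] => 1
  | [_] => 1
  | i :: j :: rest => A i j * chainProd A (j :: rest)

/-- A dual number `lam` is a (right) eigenvalue of the dual quaternion matrix `A` if
`A x = x lam` for some appreciable dual quaternion vector `x` (i.e. one whose standard
part is nonzero). -/
def IsEigenvalue {n : ℕ} (A : Matrix (Fin n) (Fin n) DualQuaternion)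
    (lam : DualNumber ℝ) : Prop :=
  ∃ x : Fin n → DualQuaternion,
    (fun i => (x i).fst) ≠ 0 ∧ A.mulVec x = fun i => x i * toDQ lam

/-- The dual quaternion Hermitian matrix `A` has the dual numbers `lam 1, …, lam n` as its
eigenvalues (counted with multiplicity), via the unitary diagonalization `U A U* = diag(lam)`
of Qi and Luo (2023). -/
def HasEigenvalues {n : ℕ} (A : Matrix (Fin n) (Fin n) DualQuaternion)
    (lam : Fin n → DualNumber ℝ) : Prop :=
  ∃ U : Matrix (Fin n) (Fin n) DualQuaternion,
    Uᴴ * U = 1 ∧ U * A * Uᴴ = Matrix.diagonal fun i => toDQ (lam i)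

/-! ### The cycle list of a permutation -/

section Cycles

variable {n : ℕ}

theorem minPeriod_pos (σ : Equiv.Perm (Fin n)) (i : Fin n) : 0 < Function.minimalPeriod σ i :=
  Function.minimalPeriod_pos_of_mem_periodicPts (σ.injective.mem_periodicPts i)

theorem nodup_orbit (σ : Equiv.Perm (Fin n)) (i : Fin n) :
    ((List.range (Function.minimalPeriod σ i)).map (fun j => (σ ^ j) i)).Nodup := by
  refine List.Nodup.map_on ?_ List.nodup_range
  intro a ha b hb h
  rw [List.mem_range] at ha hb
  rw [← Equiv.Perm.iterate_eq_pow, ← Equiv.Perm.iterate_eq_pow] at h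
  exact Function.iterate_injOn_Iio_minimalPeriod ha hb h

theorem minPeriod_le (σ : Equiv.Perm (Fin n)) (i : Fin n) : Function.minimalPeriod σ i ≤ n := by
  simpa using (nodup_orbit σ i).length_le_card

theorem pow_minPeriod (σ : Equiv.Perm (Fin n)) (i : Fin n) :
    (σ ^ Function.minimalPeriod σ i) i = i := by
  rw [← Equiv.Perm.iterate_eq_pow]; exact Function.iterate_minimalPeriod

theorem pow_mod_minPeriod (σ : Equiv.Perm (Fin n)) (i : Fin n) (j : ℕ) :
    (σ ^ (j % Function.minimalPeriod σ i)) i = (σ ^ j) i := by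
  rw [← Equiv.Perm.iterate_eq_pow, ← Equiv.Perm.iterate_eq_pow]
  exact Function.iterate_mod_minimalPeriod_eq

/-- The `takeWhile` in `cycleList` stops exactly at the minimal period. -/
theorem cycleList_eq (σ : Equiv.Perm (Fin n)) (i : Fin n) :
    cycleList σ i = (List.range (Function.minimalPeriod σ i)).map (fun j => (σ ^ j) i) := by
  obtain ⟨q, hq⟩ := Nat.exists_eq_succ_of_ne_zero (minPeriod_pos σ i).ne'
  obtain ⟨r, hr⟩ := Nat.exists_eq_add_of_le (minPeriod_le σ i)
  have hnd := nodup_orbit σ i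
  have hper := pow_minPeriod σ i
  rw [hq] at hnd hper hr ⊢
  rw [List.range_succ_eq_map, List.map_cons, List.map_map, List.nodup_cons] at hnd
  rw [List.range_succ_eq_map, List.map_cons, List.map_map]
  unfold cycleList
  have hn : List.range n = List.range (q + (r + 1)) := congrArg List.range (by omega)
  have hsplit : (List.range n).map (fun k => (σ ^ (k + 1)) i)
      = (List.range q).map (fun k => (σ ^ (k + 1)) i) ++
        i :: (List.range r).map (fun k => (σ ^ (q + (k + 1) + 1)) i) := by
    rw [hn, List.range_add, List.map_append, List.map_map, List.range_succ_eq_map, List.map_cons,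
      List.map_map]
    congr 2
  rw [hsplit, List.takeWhile_append_of_pos, List.takeWhile_cons_of_neg (by simp)]
  · simp [Function.comp_def]
  · intro a ha
    have h1 := hnd.1
    simp only [decide_eq_true_eq]
    rintro rfl
    exact h1 (by simpa [Function.comp_def] using ha)

theorem cycleList_nodup (σ : Equiv.Perm (Fin n)) (i : Fin n) : (cycleList σ i).Nodup := by
  rw [cycleList_eq]; exact nodup_orbit σ i

theorem mem_cycleList {σ : Equiv.Perm (Fin n)} {i j : Fin n} :
    j ∈ cycleList σ i ↔ ∃ k : ℕ, (σ ^ k) i = j := by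
  rw [cycleList_eq, List.mem_map]
  constructor
  · rintro ⟨k, -, h⟩; exact ⟨k, h⟩
  · rintro ⟨k, h⟩
    exact ⟨k % Function.minimalPeriod σ i,
      List.mem_range.2 (Nat.mod_lt _ (minPeriod_pos σ i)), by rw [pow_mod_minPeriod, h]⟩

theorem cycleList_symm {σ : Equiv.Perm (Fin n)} {i j : Fin n} (h : j ∈ cycleList σ i) :
    i ∈ cycleList σ j := by
  obtain ⟨k, rfl⟩ := mem_cycleList.1 h
  have : σ.SameCycle ((σ ^ k) i) i := ⟨-k, by simp⟩
  exact mem_cycleList.2 this.exists_nat_pow_eq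

theorem cycleList_congr {σ τ : Equiv.Perm (Fin n)} {i : Fin n}
    (h : ∀ k : ℕ, (σ ^ k) i = (τ ^ k) i) : cycleList σ i = cycleList τ i := by
  simp only [cycleList, h]

/-- A permutation acts on each of its cycles as the cyclic permutation of the cycle list. -/
theorem formPerm_cycleList {σ : Equiv.Perm (Fin n)} {i j : Fin n} (h : j ∈ cycleList σ i) :
    (cycleList σ i).formPerm j = σ j := by
  have hnd := cycleList_nodup σ i
  obtain ⟨k, hk, rfl⟩ := List.getElem_of_mem h
  have h1 := List.formPerm_pow_apply_getElem _ hnd 1 k hk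
  rw [pow_one] at h1
  rw [h1]
  simp only [cycleList_eq, List.length_map, List.length_range, List.getElem_map,
    List.getElem_range]
  rw [pow_mod_minPeriod, pow_succ', Equiv.Perm.mul_apply]

variable {L : List (Fin n)} {τ : Equiv.Perm (Fin n)}

theorem disjoint_formPerm (hτ : ∀ i ∈ L, τ i = i) : L.formPerm.Disjoint τ := by
  intro i
  by_cases hi : i ∈ L
  · exact Or.inr (hτ i hi)
  · exact Or.inl (List.formPerm_apply_of_notMem hi)

theorem pow_apply_eq_self {σ : Equiv.Perm (Fin n)} {i : Fin n} (h : σ i = i) (k : ℕ) :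
    (σ ^ k) i = i := by
  induction k with
  | zero => rfl
  | succ k ih => rw [pow_succ, Equiv.Perm.mul_apply, h, ih]

theorem pow_mul_apply_mem (hτ : ∀ i ∈ L, τ i = i) {i : Fin n} (hi : i ∈ L) (k : ℕ) :
    ((L.formPerm * τ) ^ k) i = (L.formPerm ^ k) i := by
  rw [(disjoint_formPerm hτ).commute.mul_pow, Equiv.Perm.mul_apply,
    pow_apply_eq_self (hτ i hi)]

theorem pow_mul_apply_notMem (hτ : ∀ i ∈ L, τ i = i) {i : Fin n} (hi : i ∉ L) (k : ℕ) :
    ((L.formPerm * τ) ^ k) i = (τ ^ k) i := by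
  rw [(disjoint_formPerm hτ).commute.eq, (disjoint_formPerm hτ).commute.symm.mul_pow,
    Equiv.Perm.mul_apply, pow_apply_eq_self (List.formPerm_apply_of_notMem hi)]

theorem cycleList_mul_notMem (hτ : ∀ i ∈ L, τ i = i) {i : Fin n} (hi : i ∉ L) :
    cycleList (L.formPerm * τ) i = cycleList τ i :=
  cycleList_congr (pow_mul_apply_notMem hτ hi)

theorem cycleList_mul_head {m : Fin n} {l : List (Fin n)} (hnd : (m :: l).Nodup)
    (hτ : ∀ i ∈ m :: l, τ i = i) : cycleList ((m :: l).formPerm * τ) m = m :: l := by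
  have key : ∀ k : ℕ, (((m :: l).formPerm * τ) ^ k) m
      = (m :: l)[k % (m :: l).length]'(Nat.mod_lt _ (by simp)) := by
    intro k
    rw [pow_mul_apply_mem hτ (by simp)]
    have := List.formPerm_pow_apply_getElem _ hnd k 0 (by simp)
    simpa using this
  have hp : Function.minimalPeriod ((m :: l).formPerm * τ) m = (m :: l).length := by
    apply le_antisymm
    · apply Function.IsPeriodicPt.minimalPeriod_le (by simp)
      change _^[_] m = m
      rw [Equiv.Perm.iterate_eq_pow, key]
      simp
    · by_contra! hlt
      have h1 := pow_minPeriod ((m :: l).formPerm * τ) m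
      rw [key] at h1
      have h2 : (m :: l)[Function.minimalPeriod ((m :: l).formPerm * τ) m] = (m :: l)[0] := by
        simp only [Nat.mod_eq_of_lt hlt] at h1
        exact h1
      have := (hnd.getElem_inj_iff).1 h2
      exact (minPeriod_pos _ _).ne' this
  rw [cycleList_eq, hp]
  apply List.ext_getElem
  · simp
  · intro k h1 h2
    simp only [List.getElem_map, List.getElem_range, key, Nat.mod_eq_of_lt h2]

end Cycles

/-! ### Sums over repetition-free lists -/

section Lists

variable {n : ℕ}

/-- The finite set of all lists without repetitions whose entries lie in `T`. -/
def nodupLists (T : Finset (Fin n)) : Finset (List (Fin n)) :=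
  ((Finset.univ : Finset {l : List (Fin n) // l.Nodup}).map
    (Function.Embedding.subtype _)).filter (fun l => ∀ x ∈ l, x ∈ T)

@[simp]
theorem mem_nodupLists {T : Finset (Fin n)} {l : List (Fin n)} :
    l ∈ nodupLists T ↔ l.Nodup ∧ ∀ x ∈ l, x ∈ T := by
  simp [nodupLists]

/-- A repetition-free list in `T` either avoids `z`, or is uniquely `c ++ z :: d`. -/
theorem sum_nodupLists_split {M : Type*} [AddCommMonoid M] {T : Finset (Fin n)} {z : Fin n}
    (hz : z ∈ T) (f : List (Fin n) → M) :
    ∑ l ∈ nodupLists T, f l = ∑ l ∈ nodupLists (T.erase z), f l +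
      ∑ c ∈ nodupLists (T.erase z), ∑ d ∈ nodupLists (T.erase z \ c.toFinset),
        f (c ++ z :: d) := by
  rw [← Finset.sum_filter_not_add_sum_filter (nodupLists T) (fun l => z ∈ l)]
  congr 1
  · apply Finset.sum_congr _ (fun _ _ => rfl)
    ext l
    simp only [Finset.mem_filter, mem_nodupLists, Finset.mem_erase]
    constructor
    · rintro ⟨⟨h1, h2⟩, h3⟩
      exact ⟨h1, fun x hx => ⟨fun h => h3 (h ▸ hx), h2 x hx⟩⟩
    · rintro ⟨h1, h2⟩
      exact ⟨⟨h1, fun x hx => (h2 x hx).2⟩, fun h => (h2 z h).1 rfl⟩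
  · rw [Finset.sum_sigma']
    symm
    apply Finset.sum_bij (fun (p : Σ _ : List (Fin n), List (Fin n)) _ => p.1 ++ z :: p.2)
    · rintro ⟨c, d⟩ h
      simp only [Finset.mem_sigma, mem_nodupLists, Finset.mem_erase, Finset.mem_sdiff,
        List.mem_toFinset] at h
      obtain ⟨⟨h1, h2⟩, h3, h4⟩ := h
      simp only [Finset.mem_filter, mem_nodupLists, List.nodup_append, List.nodup_cons,
        List.mem_append, List.mem_cons]
      grind
    · rintro ⟨c, d⟩ h ⟨c', d'⟩ h' heq
      simp only [Finset.mem_sigma, mem_nodupLists, Finset.mem_erase, Finset.mem_sdiff,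
        List.mem_toFinset] at h h'
      have hc : z ∉ c := fun hz => (h.1.2 z hz).1 rfl
      have hc' : z ∉ c' := fun hz => (h'.1.2 z hz).1 rfl
      have hd : z ∉ d := fun hz => (h.2.2 z hz).1.1 rfl
      have hd' : z ∉ d' := fun hz => (h'.2.2 z hz).1.1 rfl
      dsimp only at heq
      have hcd : c = c' ∧ d = d' := by
        rw [List.append_eq_append_iff] at heq
        rcases heq with ⟨a, h1, h2⟩ | ⟨a, h1, h2⟩ <;> cases a <;> simp_all
      rw [hcd.1, hcd.2]
    · intro l hl
      simp only [Finset.mem_filter, mem_nodupLists] at hl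
      obtain ⟨⟨h1, h2⟩, h3⟩ := hl
      obtain ⟨c, d, rfl⟩ := List.append_of_mem h3
      refine ⟨⟨c, d⟩, ?_, rfl⟩
      simp only [Finset.mem_sigma, mem_nodupLists, Finset.mem_erase, Finset.mem_sdiff,
        List.mem_toFinset]
      simp only [List.nodup_append, List.nodup_cons, List.mem_append, List.mem_cons] at h1 h2
      grind
    · intros; rfl

/-- Sums over ordered pairs of disjoint repetition-free lists are symmetric. -/
theorem sum_nodupLists_comm {M : Type*} [AddCommMonoid M] (V : Finset (Fin n))
    (f : List (Fin n) → List (Fin n) → M) :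
    ∑ c ∈ nodupLists V, ∑ d ∈ nodupLists (V \ c.toFinset), f c d =
      ∑ d ∈ nodupLists V, ∑ c ∈ nodupLists (V \ d.toFinset), f c d := by
  apply Finset.sum_comm'
  intro c d
  simp only [mem_nodupLists, Finset.mem_sdiff, List.mem_toFinset]
  grind

theorem sum_nodupLists_reverse {M : Type*} [AddCommMonoid M] (V : Finset (Fin n))
    (f : List (Fin n) → M) :
    ∑ c ∈ nodupLists V, f c.reverse = ∑ c ∈ nodupLists V, f c := by
  apply Finset.sum_bij' (fun c _ => c.reverse) (fun c _ => c.reverse) <;> simp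

theorem sdiff_append_cons (V : Finset (Fin n)) (z : Fin n) (c d : List (Fin n)) :
    V \ (c ++ z :: d).toFinset = (V.erase z \ c.toFinset) \ d.toFinset := by
  rw [List.toFinset_append, List.toFinset_cons, Finset.union_insert, Finset.sdiff_insert,
    ← Finset.sup_eq_union, ← sdiff_sdiff_left, Finset.erase_sdiff_comm, Finset.erase_sdiff_comm]

end Lists

/-! ### Path products and the Chen determinant of a principal submatrix -/

section ChenOn

variable {n : ℕ} {R : Type*} [Ring R]

/-- The product `a_{x l₁} a_{l₁ l₂} ⋯ a_{l_r y}` along the path from `x` to `y` through `l`. -/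
def pathProd (A : Matrix (Fin n) (Fin n) R) : Fin n → List (Fin n) → Fin n → R
  | x, [], y => A x y
  | x, z :: l, y => A x z * pathProd A z l y

theorem pathProd_append (A : Matrix (Fin n) (Fin n) R) (x z y : Fin n) (c d : List (Fin n)) :
    pathProd A x (c ++ z :: d) y = pathProd A x c z * pathProd A z d y := by
  induction c generalizing x with
  | nil => rfl
  | cons w c ih => simp only [List.cons_append, pathProd, ih, mul_assoc]

theorem pathProd_congr {A B : Matrix (Fin n) (Fin n) R} (x : Fin n) (l : List (Fin n)) (y : Fin n)
    (h : ∀ i ∈ x :: l, ∀ j, A i j = B i j) : pathProd A x l y = pathProd B x l y := by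
  induction l generalizing x with
  | nil => exact h x (by simp) y
  | cons z l ih =>
    simp only [pathProd]
    rw [h x (by simp), ih z (fun i hi => h i (List.mem_cons_of_mem _ hi))]

/-- The leaders of the cycles of `σ` that lie in `S`, in decreasing order. -/
def leadersIn (S : Finset (Fin n)) (σ : Equiv.Perm (Fin n)) : List (Fin n) :=
  ((List.finRange n).filter
    (fun i => decide (i ∈ S) && (cycleList σ i).all (fun j => decide (j ≤ i)))).reverse

theorem mem_leadersIn {S : Finset (Fin n)} {σ : Equiv.Perm (Fin n)} {i : Fin n} :
    i ∈ leadersIn S σ ↔ i ∈ S ∧ ∀ j ∈ cycleList σ i, j ≤ i := by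
  simp [leadersIn]

theorem leadersIn_univ (σ : Equiv.Perm (Fin n)) : leadersIn Finset.univ σ = chenLeaders σ := by
  simp [leadersIn, chenLeaders]

theorem leadersIn_pairwise (S : Finset (Fin n)) (σ : Equiv.Perm (Fin n)) :
    (leadersIn S σ).Pairwise (fun a b => b < a) := by
  rw [leadersIn, List.pairwise_reverse]
  exact (List.pairwise_lt_finRange n).filter _

/-- The Chen determinant of the principal submatrix of `A` with index set `S`: the sum runs over
the permutations that are the identity off `S`. The exponent `|S| + r` has the parity of
`|S| - r`. -/
def cdetOn (A : Matrix (Fin n) (Fin n) R) (S : Finset (Fin n)) : R :=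
  ∑ σ ∈ Finset.univ.filter (fun σ : Equiv.Perm (Fin n) => ∀ i, i ∉ S → σ i = i),
    (-1 : R) ^ (S.card + (leadersIn S σ).length) *
      ((((leadersIn S σ).map (cycleList σ)).flatten).map (fun i => A i (σ i))).prod

theorem cdetOn_univ (A : Matrix (Fin n) (Fin n) R) : cdetOn A Finset.univ = Cdet A := by
  unfold cdetOn Cdet chenOrder
  simp only [leadersIn_univ, Finset.mem_univ, not_true_eq_false, false_imp_iff, implies_true,
    Finset.filter_true, Finset.card_univ, Fintype.card_fin]
  refine Finset.sum_congr rfl fun σ _ => ?_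
  congr 1
  have hle : (chenLeaders σ).length ≤ n := by
    unfold chenLeaders
    rw [List.length_reverse]
    exact (List.length_filter_le _ _).trans_eq List.length_finRange
  have h : n + (chenLeaders σ).length = (n - (chenLeaders σ).length)
      + 2 * (chenLeaders σ).length := by omega
  rw [h, pow_add, pow_mul]
  simp

theorem cdetOn_empty (A : Matrix (Fin n) (Fin n) R) : cdetOn A ∅ = 1 := by
  have h : (Finset.univ.filter
      (fun σ : Equiv.Perm (Fin n) => ∀ i, i ∉ (∅ : Finset (Fin n)) → σ i = i)) = {1} := by
    ext σ
    simp [Equiv.ext_iff]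
  have h2 : leadersIn ∅ (1 : Equiv.Perm (Fin n)) = [] := by simp [leadersIn]
  rw [cdetOn, h, Finset.sum_singleton, h2]
  simp

/-- Splitting off the cycle of the maximum `m` of `S` from the list of leaders. -/
theorem leadersIn_mul {S : Finset (Fin n)} {m : Fin n} {l : List (Fin n)}
    {τ : Equiv.Perm (Fin n)} (hm : m ∈ S) (hmax : ∀ i ∈ S, i ≤ m) (hnd : (m :: l).Nodup)
    (hl : ∀ x ∈ l, x ∈ S) (hτ : ∀ i ∈ m :: l, τ i = i) :
    leadersIn S ((m :: l).formPerm * τ) = m :: leadersIn (S.erase m \ l.toFinset) τ := by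
  have hcyc := cycleList_mul_head hnd hτ
  have hlt : ∀ i ∈ leadersIn (S.erase m \ l.toFinset) τ, i < m := by
    intro i hi
    have := (mem_leadersIn.1 hi).1
    simp only [Finset.mem_sdiff, Finset.mem_erase] at this
    exact lt_of_le_of_ne (hmax i this.1.2) this.1.1
  have hpw : (m :: leadersIn (S.erase m \ l.toFinset) τ).Pairwise (fun a b => b < a) :=
    List.pairwise_cons.2 ⟨hlt, leadersIn_pairwise _ _⟩
  have hpw' := leadersIn_pairwise S ((m :: l).formPerm * τ)
  refine List.Perm.eq_of_pairwise (fun a b _ _ h1 h2 => (lt_asymm h1 h2).elim) hpw' hpw ?_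
  rw [List.perm_ext_iff_of_nodup (hpw'.imp fun h => h.ne') (hpw.imp fun h => h.ne')]
  intro i
  rw [List.mem_cons, mem_leadersIn, mem_leadersIn]
  by_cases him : i = m
  · subst him
    simp only [true_or, iff_true]
    refine ⟨hm, fun j hj => ?_⟩
    rw [hcyc] at hj
    rcases List.mem_cons.1 hj with rfl | hj
    · exact le_rfl
    · exact hmax j (hl j hj)
  · by_cases hil : i ∈ l
    · have h1 : m ∈ cycleList ((m :: l).formPerm * τ) i :=
        cycleList_symm (by rw [hcyc]; exact List.mem_cons_of_mem _ hil)
      have h2 : ¬ (m ≤ i) := fun h => him (le_antisymm (hmax i (hl i hil)) h)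
      simp only [him, false_or, Finset.mem_sdiff, List.mem_toFinset, hil, not_true_eq_false,
        and_false, false_and, iff_false, not_and]
      exact fun _ h => h2 (h m h1)
    · rw [cycleList_mul_notMem hτ (by simp [him, hil])]
      simp [him, hil]

/-- If `σ` runs through `x :: l` in order and then reaches `m`, the entries `A i (σ i)` multiply to
the path product from `x` to `m`. -/
theorem prod_cycle (A : Matrix (Fin n) (Fin n) R) {m : Fin n} {l : List (Fin n)}
    (σ : Equiv.Perm (Fin n)) (x : Fin n)
    (hchain : ∀ (j : ℕ) (hj : j + 1 < (x :: l).length), σ ((x :: l)[j]) = (x :: l)[j + 1])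
    (hlast : σ ((x :: l).getLast (by simp)) = m) :
    ((x :: l).map (fun i => A i (σ i))).prod = pathProd A x l m := by
  induction l generalizing x with
  | nil => simpa [pathProd] using congrArg (A x) hlast
  | cons z l ih =>
    rw [List.map_cons, List.prod_cons, pathProd, ih z]
    · have := hchain 0 (by simp)
      simp only [List.getElem_cons_zero, zero_add, List.getElem_cons_succ] at this
      rw [this]
    · intro j hj
      have := hchain (j + 1) (by simpa using hj)
      simpa only [List.getElem_cons_succ] using this
    · simpa using hlast

theorem prod_formPerm (A : Matrix (Fin n) (Fin n) R) {m : Fin n} {l : List (Fin n)}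
    {τ : Equiv.Perm (Fin n)} (hnd : (m :: l).Nodup) (hτ : ∀ i ∈ m :: l, τ i = i) :
    ((m :: l).map (fun i => A i (((m :: l).formPerm * τ) i))).prod = pathProd A m l m := by
  have h1 : ∀ i ∈ m :: l, ((m :: l).formPerm * τ) i = (m :: l).formPerm i := by
    intro i hi
    simpa using pow_mul_apply_mem hτ hi 1
  apply prod_cycle
  · intro j hj
    rw [h1 _ (List.getElem_mem _), List.formPerm_apply_lt_getElem _ hnd _ hj]
  · rw [h1 _ (List.getLast_mem _), List.formPerm_apply_getLast]

/-- Expansion of the Chen determinant along the cycle of the largest index. -/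
theorem cdetOn_expand (A : Matrix (Fin n) (Fin n) R) {S : Finset (Fin n)} {m : Fin n}
    (hm : m ∈ S) (hmax : ∀ i ∈ S, i ≤ m) :
    cdetOn A S = ∑ l ∈ nodupLists (S.erase m),
      (-1) ^ l.length * (pathProd A m l m * cdetOn A (S.erase m \ l.toFinset)) := by
  have hcard : ∀ l ∈ nodupLists (S.erase m),
      S.card = (S.erase m \ l.toFinset).card + l.length + 1 := by
    intro l hl
    rw [mem_nodupLists] at hl
    have h1 : l.toFinset ⊆ S.erase m := fun x hx => hl.2 x (List.mem_toFinset.1 hx)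
    have h2 := Finset.card_sdiff_add_card_eq_card h1
    rw [List.toFinset_card_of_nodup hl.1] at h2
    rw [h2, Finset.card_erase_add_one hm]
  simp only [cdetOn, Finset.mul_sum]
  rw [Finset.sum_sigma']
  symm
  have hdata : ∀ p : (Σ _ : List (Fin n), Equiv.Perm (Fin n)),
      p ∈ (nodupLists (S.erase m)).sigma (fun l => Finset.univ.filter
        (fun σ : Equiv.Perm (Fin n) => ∀ i, i ∉ S.erase m \ l.toFinset → σ i = i)) →
      p.1 ∈ nodupLists (S.erase m) ∧ (m :: p.1).Nodup ∧ (∀ x ∈ p.1, x ∈ S) ∧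
        (∀ i ∈ m :: p.1, p.2 i = i) ∧ ∀ i, i ∉ S → p.2 i = i := by
    rintro ⟨l, τ⟩ h
    simp only [Finset.mem_sigma, mem_nodupLists, Finset.mem_filter, Finset.mem_univ, true_and,
      Finset.mem_sdiff, Finset.mem_erase, List.mem_toFinset] at h
    obtain ⟨⟨h1, h2⟩, h3⟩ := h
    refine ⟨by simpa using ⟨h1, h2⟩, List.nodup_cons.2 ⟨fun h => (h2 m h).1 rfl, h1⟩,
      fun x hx => (h2 x hx).2, fun i hi => h3 i ?_, fun i hi => h3 i fun h => hi h.1.2⟩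
    rintro ⟨⟨h4, -⟩, h5⟩
    exact (List.mem_cons.1 hi).elim h4 h5
  have hcons : ∀ σ : Equiv.Perm (Fin n), m :: (cycleList σ m).tail = cycleList σ m :=
    fun σ => rfl
  refine Finset.sum_bij' (fun (p : Σ _ : List (Fin n), Equiv.Perm (Fin n)) _ =>
      (m :: p.1).formPerm * p.2)
    (fun σ _ => ⟨(cycleList σ m).tail, (cycleList σ m).formPerm⁻¹ * σ⟩) ?_ ?_ ?_ ?_ ?_
  · rintro p hp
    obtain ⟨-, hnd, hl, hτ, hτS⟩ := hdata p hp
    simp only [Finset.mem_filter, Finset.mem_univ, true_and, Equiv.Perm.mul_apply]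
    intro i hi
    rw [hτS i hi]
    refine List.formPerm_apply_of_notMem fun h => hi ?_
    rcases List.mem_cons.1 h with rfl | h
    · exact hm
    · exact hl i h
  · intro σ h
    simp only [Finset.mem_filter, Finset.mem_univ, true_and] at h
    have hS : ∀ x ∈ cycleList σ m, x ∈ S := by
      intro x hx
      by_contra hxS
      obtain ⟨k, hk⟩ := mem_cycleList.1 (cycleList_symm hx)
      rw [pow_apply_eq_self (h x hxS)] at hk
      exact hxS (hk ▸ hm)
    have hnd := cycleList_nodup σ m
    rw [← hcons] at hS hnd
    rw [List.nodup_cons] at hnd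
    simp only [Finset.mem_sigma, mem_nodupLists, Finset.mem_filter, Finset.mem_univ, true_and,
      Finset.mem_sdiff, Finset.mem_erase, List.mem_toFinset]
    refine ⟨⟨hnd.2, fun x hx => ⟨fun hxm => hnd.1 (hxm ▸ hx),
      hS x (List.mem_cons_of_mem _ hx)⟩⟩, fun i hi => ?_⟩
    rw [Equiv.Perm.mul_apply, Equiv.Perm.inv_eq_iff_eq]
    by_cases hic : i ∈ cycleList σ m
    · exact (formPerm_cycleList hic).symm
    · rw [List.formPerm_apply_of_notMem hic]
      apply h
      intro hiS
      rw [← hcons, List.mem_cons, not_or] at hic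
      exact hi ⟨⟨hic.1, hiS⟩, hic.2⟩
  · rintro ⟨l, τ⟩ hp
    obtain ⟨-, hnd, hl, hτ, hτS⟩ := hdata _ hp
    simp only [cycleList_mul_head hnd hτ, List.tail_cons, inv_mul_cancel_left]
  · intro σ h
    simp only [hcons, mul_inv_cancel_left]
  · rintro ⟨l, τ⟩ hp
    obtain ⟨hl', hnd, hl, hτ, hτS⟩ := hdata _ hp
    simp only
    have hrest : ((leadersIn (S.erase m \ l.toFinset) τ).map
          (cycleList ((m :: l).formPerm * τ))).flatten.map
            (fun i => A i (((m :: l).formPerm * τ) i))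
        = ((leadersIn (S.erase m \ l.toFinset) τ).map (cycleList τ)).flatten.map
            (fun i => A i (τ i)) := by
      have hnot : ∀ i ∈ leadersIn (S.erase m \ l.toFinset) τ, i ∉ m :: l := by
        intro i hi
        have := (mem_leadersIn.1 hi).1
        simp only [Finset.mem_sdiff, Finset.mem_erase, List.mem_toFinset] at this
        simp [this.1.1, this.2]
      rw [List.map_congr_left fun i hi => cycleList_mul_notMem hτ (hnot i hi)]
      apply List.map_congr_left
      intro j hj
      obtain ⟨c, hc, hjc⟩ := List.mem_flatten.1 hj
      obtain ⟨i, hi, rfl⟩ := List.mem_map.1 hc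
      have hj' : j ∉ m :: l := by
        intro hjl
        obtain ⟨k, hk⟩ := mem_cycleList.1 (cycleList_symm hjc)
        rw [pow_apply_eq_self (hτ j hjl)] at hk
        exact hnot i hi (hk ▸ hjl)
      simpa using congrArg (A j) (pow_mul_apply_notMem hτ hj' 1)
    rw [leadersIn_mul hm hmax hnd hl hτ, List.map_cons, List.flatten_cons, List.map_append,
      List.prod_append, cycleList_mul_head hnd hτ, hrest, prod_formPerm A hnd hτ, hcard l hl',
      List.length_cons]
    have hsign : (-1 : R) ^ ((S.erase m \ l.toFinset).card + l.length + 1 +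
          ((leadersIn (S.erase m \ l.toFinset) τ).length + 1))
        = (-1) ^ l.length * (-1) ^ ((S.erase m \ l.toFinset).card +
          (leadersIn (S.erase m \ l.toFinset) τ).length) := by
      rw [← pow_add, show ∀ a b c : ℕ, a + b + 1 + (c + 1) = b + (a + c) + 2 by omega, pow_add]
      simp
    rw [hsign, mul_assoc]
    congr 1
    rw [← mul_assoc, ((Commute.neg_one_left _).pow_left _).eq, mul_assoc, mul_assoc]
    congr 1
    exact ((Commute.neg_one_left _).pow_left _).eq

theorem cdetOn_congr {A B : Matrix (Fin n) (Fin n) R} (S : Finset (Fin n))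
    (h : ∀ i ∈ S, ∀ j, A i j = B i j) : cdetOn A S = cdetOn B S := by
  induction S using Finset.strongInduction with
  | H S ih =>
    rcases S.eq_empty_or_nonempty with rfl | hne
    · rw [cdetOn_empty, cdetOn_empty]
    · have hm := S.max'_mem hne
      have hmax : ∀ i ∈ S, i ≤ S.max' hne := fun i hi => S.le_max' i hi
      rw [cdetOn_expand A hm hmax, cdetOn_expand B hm hmax]
      refine Finset.sum_congr rfl fun l hl => ?_
      rw [mem_nodupLists] at hl
      have hsub : S.erase (S.max' hne) \ l.toFinset ⊂ S :=
        lt_of_le_of_lt Finset.sdiff_subset (Finset.erase_ssubset hm)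
      rw [ih _ hsub fun i hi => h i (hsub.1 hi), pathProd_congr (B := B)]
      intro i hi
      rcases List.mem_cons.1 hi with rfl | hi
      · exact h _ hm
      · exact h i (Finset.mem_of_mem_erase (hl.2 i hi))

end ChenOn

/-! ### Conjugation and central elements -/

section Conj

/-- Conjugation makes the dual quaternions a star ring. -/
instance : StarRing DualQuaternion where
  star_involutive q := TrivSqZeroExt.ext (star_star _) (star_star _)
  star_mul p q := by
    apply TrivSqZeroExt.ext
    · exact star_mul p.fst q.fst
    · change star (p * q).snd = (star q * star p : DualQuaternion).snd
      simp only [TrivSqZeroExt.snd_mul, smul_eq_mul, MulOpposite.smul_eq_mul_unop,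
        MulOpposite.unop_op, star_add, star_mul]
      exact add_comm _ _
  star_add p q := TrivSqZeroExt.ext (star_add _ _) (star_add _ _)

theorem quat_commute_of_star_eq {a : ℍ[ℝ]} (h : star a = a) (b : ℍ[ℝ]) : a * b = b * a := by
  rw [Quaternion.star_eq_self] at h
  rw [h]
  exact Quaternion.coe_commutes _ _

/-- A dual quaternion fixed by conjugation is a dual number, hence central. -/
theorem commute_of_star_eq {a : DualQuaternion} (h : star a = a) (b : DualQuaternion) :
    a * b = b * a := by
  have h1 : star a.fst = a.fst := congrArg TrivSqZeroExt.fst h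
  have h2 : star a.snd = a.snd := congrArg TrivSqZeroExt.snd h
  apply TrivSqZeroExt.ext
  · exact quat_commute_of_star_eq h1 _
  · simp only [TrivSqZeroExt.snd_mul, smul_eq_mul, MulOpposite.smul_eq_mul_unop,
        MulOpposite.unop_op]
    rw [quat_commute_of_star_eq h1, quat_commute_of_star_eq h2, add_comm]

/-- Twice the real part does not see the order of the factors. -/
theorem mul_add_star_comm (a b : DualQuaternion) :
    a * b + star (a * b) = b * a + star (b * a) := by
  apply TrivSqZeroExt.ext
  · change a.fst * b.fst + star (a.fst * b.fst) = b.fst * a.fst + star (b.fst * a.fst)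
    ext <;> simp <;> ring
  · change (a * b).snd + star (a * b).snd = (b * a).snd + star (b * a).snd
    simp only [TrivSqZeroExt.snd_mul, smul_eq_mul, MulOpposite.smul_eq_mul_unop,
        MulOpposite.unop_op]
    ext <;> simp <;> ring

theorem eq_of_add_star_eq {a b : DualQuaternion} (ha : star a = a) (hb : star b = b)
    (h : a + star a = b + star b) : a = b := by
  rw [ha, hb, ← two_smul ℝ, ← two_smul ℝ] at h
  exact smul_right_injective _ (two_ne_zero (α := ℝ)) h

end Conj

/-! ### Hermitian matrices -/

section Hermitian

variable {n : ℕ} {A : Matrix (Fin n) (Fin n) DualQuaternion}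

theorem star_pathProd (hA : Aᴴ = A) (x : Fin n) (l : List (Fin n)) (y : Fin n) :
    star (pathProd A x l y) = pathProd A y l.reverse x := by
  have h : ∀ i j, star (A i j) = A j i := fun i j => congrFun (congrFun hA j) i
  induction l generalizing x with
  | nil => exact h x y
  | cons z l ih =>
    rw [pathProd, star_mul, ih, h, List.reverse_cons, pathProd_append]
    rfl

theorem neg_one_pow_mul_comm (k : ℕ) (x y : DualQuaternion) :
    x * ((-1) ^ k * y) = (-1) ^ k * (x * y) := by
  rw [← mul_assoc, ← ((Commute.neg_one_left x).pow_left k).eq, mul_assoc]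

/-- The expansion of the Chen determinant on `T` along the cycle of an arbitrary index `k`. -/
def cycleExp (A : Matrix (Fin n) (Fin n) DualQuaternion) (T : Finset (Fin n)) (k : Fin n) :
    DualQuaternion :=
  ∑ c ∈ nodupLists (T.erase k),
    (-1) ^ c.length * (pathProd A k c k * cdetOn A (T.erase k \ c.toFinset))

theorem star_cycleExp (hA : Aᴴ = A) {T : Finset (Fin n)} {k : Fin n} (hk : k ∈ T)
    (hD : ∀ S, S ⊂ T → star (cdetOn A S) = cdetOn A S) :
    star (cycleExp A T k) = cycleExp A T k := by
  unfold cycleExp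
  rw [star_sum, ← sum_nodupLists_reverse]
  refine Finset.sum_congr rfl fun c hc => ?_
  have hsub : T.erase k \ c.toFinset ⊂ T :=
    lt_of_le_of_lt Finset.sdiff_subset (Finset.erase_ssubset hk)
  rw [star_mul, star_mul, star_pathProd hA, List.reverse_reverse, List.toFinset_reverse,
    List.length_reverse, hD _ hsub, star_pow, star_neg, star_one,
    ((Commute.neg_one_left _).pow_left _).eq, commute_of_star_eq (hD _ hsub)]

/-- Expansion at `k`, split according to whether the cycle of `k` contains `m`; in the remaining
determinant of the first case the cycle of `m` is split off as well. -/
theorem cycleExp_split {T : Finset (Fin n)} {k m : Fin n} (hk : k ∈ T) (hm : m ∈ T) (hkm : k ≠ m)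
    (hexp : ∀ S, S ⊂ T → ∀ i ∈ S, cdetOn A S = cycleExp A S i) :
    cycleExp A T k =
      ∑ c ∈ nodupLists ((T.erase k).erase m),
        ∑ d ∈ nodupLists ((T.erase k).erase m \ c.toFinset),
          ((-1) ^ (c.length + d.length) * (pathProd A k c k * pathProd A m d m *
              cdetOn A (((T.erase k).erase m \ c.toFinset) \ d.toFinset))
            - (-1) ^ (c.length + d.length) * (pathProd A k c m * pathProd A m d k *
              cdetOn A (((T.erase k).erase m \ c.toFinset) \ d.toFinset))) := by
  have hm' : m ∈ T.erase k := Finset.mem_erase.2 ⟨hkm.symm, hm⟩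
  rw [cycleExp, sum_nodupLists_split hm']
  simp only [Finset.sum_sub_distrib]
  rw [sub_eq_add_neg]
  congr 1
  · refine Finset.sum_congr rfl fun c hc => ?_
    rw [mem_nodupLists] at hc
    have hsub : T.erase k \ c.toFinset ⊂ T :=
      lt_of_le_of_lt Finset.sdiff_subset (Finset.erase_ssubset hk)
    have hmc : m ∉ c := fun h => (Finset.mem_erase.1 (hc.2 m h)).1 rfl
    rw [hexp _ hsub m (by simp [hmc, hkm.symm, hm]), cycleExp,
      ← Finset.erase_sdiff_comm (T.erase k), Finset.mul_sum, Finset.mul_sum]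
    refine Finset.sum_congr rfl fun d _ => ?_
    rw [neg_one_pow_mul_comm, ← mul_assoc, ← pow_add, mul_assoc]
  · rw [← Finset.sum_neg_distrib]
    refine Finset.sum_congr rfl fun c _ => ?_
    rw [← Finset.sum_neg_distrib]
    refine Finset.sum_congr rfl fun d _ => ?_
    rw [sdiff_append_cons, pathProd_append, List.length_append, List.length_cons, ← add_assoc, pow_succ]
    simp

/-- For a Hermitian matrix every principal Chen determinant is fixed by conjugation and may be
expanded along the cycle of any index. Each statement feeds the other for larger index sets. -/
theorem cdetOn_hermitian (hA : Aᴴ = A) (T : Finset (Fin n)) :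
    star (cdetOn A T) = cdetOn A T ∧ ∀ k ∈ T, cdetOn A T = cycleExp A T k := by
  induction T using Finset.strongInduction with
  | H T ih =>
    have hD : ∀ S, S ⊂ T → star (cdetOn A S) = cdetOn A S := fun S hS => (ih S hS).1
    have hE : ∀ S, S ⊂ T → ∀ i ∈ S, cdetOn A S = cycleExp A S i := fun S hS => (ih S hS).2
    rcases T.eq_empty_or_nonempty with rfl | hne
    · simp [cdetOn_empty]
    · have hm := T.max'_mem hne
      set m := T.max' hne with hmdef
      have hTm : cdetOn A T = cycleExp A T m :=
        cdetOn_expand A hm fun i hi => T.le_max' i hi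
      refine ⟨by rw [hTm, star_cycleExp hA hm hD], fun k hk => ?_⟩
      rcases eq_or_ne k m with rfl | hkm
      · exact hTm
      rw [hTm]
      refine eq_of_add_star_eq (star_cycleExp hA hm hD) (star_cycleExp hA hk hD) ?_
      rw [cycleExp_split hm hk hkm.symm hE, cycleExp_split hk hm hkm hE,
        sum_nodupLists_comm, Finset.erase_right_comm]
      simp only [star_sum, ← Finset.sum_add_distrib]
      refine Finset.sum_congr rfl fun c _ => Finset.sum_congr rfl fun d _ => ?_
      have hsub : ((T.erase k).erase m \ c.toFinset) \ d.toFinset ⊂ T :=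
        lt_of_le_of_lt (Finset.sdiff_subset.trans
          (Finset.sdiff_subset.trans (Finset.erase_subset _ _))) (Finset.erase_ssubset hk)
      have hcomm := commute_of_star_eq (hD _ hsub)
      have hset : ((T.erase k).erase m \ d.toFinset) \ c.toFinset
          = ((T.erase k).erase m \ c.toFinset) \ d.toFinset := sdiff_right_comm _ _ _
      rw [hset, add_comm d.length]
      set D := cdetOn A (((T.erase k).erase m \ c.toFinset) \ d.toFinset)
      -- Twice the real part of `± x y D` is symmetric in `x` and `y` since `±D` is central.
      have hsym : ∀ x y : DualQuaternion,
          (-1) ^ (c.length + d.length) * (x * y * D)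
              + star ((-1) ^ (c.length + d.length) * (x * y * D))
            = (-1) ^ (c.length + d.length) * (y * x * D)
              + star ((-1) ^ (c.length + d.length) * (y * x * D)) := by
        intro x y
        have h1 : (-1) ^ (c.length + d.length) * (x * y * D)
            = x * ((-1) ^ (c.length + d.length) * (y * D)) := by
          rw [neg_one_pow_mul_comm, mul_assoc]
        have h2 : (-1) ^ (c.length + d.length) * (y * x * D)
            = ((-1) ^ (c.length + d.length) * (y * D)) * x := by
          rw [mul_assoc, mul_assoc, mul_assoc, hcomm x]
        rw [h1, h2, mul_add_star_comm]
      have e1 := hsym (pathProd A m d m) (pathProd A k c k)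
      have e2 := hsym (pathProd A m d k) (pathProd A k c m)
      rw [star_sub, star_sub, sub_add_sub_comm, sub_add_sub_comm, e1, e2]

end Hermitian

/-- If the last row of a dual quaternion Hermitian matrix is replaced by another row of it
(possibly multiplied on the left by a dual quaternion `α`), the Chen determinant of the
resulting matrix is zero. -/
theorem statement7 {n : ℕ} (A : Matrix (Fin (n + 1)) (Fin (n + 1)) DualQuaternion)
    (hA : Aᴴ = A) (k : Fin (n + 1)) (hk : k ≠ Fin.last n) (α : DualQuaternion) :
    Cdet (A.updateRow (Fin.last n) (fun l => α * A k l)) = 0 := by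
  have hlast : Fin.last n ∈ (Finset.univ : Finset (Fin (n + 1))) := Finset.mem_univ _
  set U := (Finset.univ : Finset (Fin (n + 1))).erase (Fin.last n) with hU
  have hkU : k ∈ U := by simp [hU, hk]
  set B := A.updateRow (Fin.last n) (fun l => α * A k l) with hB
  have hBA : ∀ i, i ≠ Fin.last n → ∀ j, B i j = A i j := fun i hi j => by
    rw [hB, Matrix.updateRow_ne hi]
  have hBlast : ∀ j, B (Fin.last n) j = α * A k j := fun j => by
    rw [hB, Matrix.updateRow_self]
  have hpath : ∀ l ∈ nodupLists U,
      pathProd B (Fin.last n) l (Fin.last n) = α * pathProd A k l (Fin.last n) := by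
    intro l hl
    rw [mem_nodupLists] at hl
    cases l with
    | nil => exact hBlast _
    | cons z l =>
      rw [pathProd, pathProd, hBlast, mul_assoc]
      congr 2
      exact pathProd_congr _ _ _ fun i hi => hBA i (Finset.ne_of_mem_erase (hl.2 i hi))
  have hmain : Cdet B = α * ∑ l ∈ nodupLists U,
      (-1) ^ l.length * (pathProd A k l (Fin.last n) * cdetOn A (U \ l.toFinset)) := by
    rw [← cdetOn_univ, cdetOn_expand B hlast (fun i _ => Fin.le_last i), Finset.mul_sum]
    refine Finset.sum_congr rfl fun l hl => ?_
    rw [hpath l hl, cdetOn_congr (B := A), neg_one_pow_mul_comm, mul_assoc]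
    intro i hi
    exact hBA i (Finset.ne_of_mem_erase (Finset.mem_sdiff.1 hi).1)
  rw [hmain, sum_nodupLists_split hkU]
  -- The lists through `k` cancel against those avoiding `k`, once the determinant left over by
  -- the latter is expanded along the cycle of `k`.
  have hfirst : ∑ l ∈ nodupLists (U.erase k),
      (-1) ^ l.length * (pathProd A k l (Fin.last n) * cdetOn A (U \ l.toFinset))
      = ∑ d ∈ nodupLists (U.erase k), ∑ c ∈ nodupLists (U.erase k \ d.toFinset),
        (-1) ^ (c.length + d.length) * (pathProd A k c k * pathProd A k d (Fin.last n) *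
          cdetOn A ((U.erase k \ d.toFinset) \ c.toFinset)) := by
    refine Finset.sum_congr rfl fun d hd => ?_
    rw [mem_nodupLists] at hd
    have hkd : k ∈ U \ d.toFinset := by
      have : k ∉ d := fun h => Finset.ne_of_mem_erase (hd.2 k h) rfl
      simp [hkU, this]
    rw [← commute_of_star_eq (cdetOn_hermitian hA _).1, (cdetOn_hermitian hA _).2 k hkd, cycleExp,
      ← Finset.erase_sdiff_comm U, Finset.sum_mul, Finset.mul_sum]
    refine Finset.sum_congr rfl fun c _ => ?_
    rw [add_comm c.length, pow_add, mul_assoc, mul_assoc, mul_assoc, mul_assoc,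
      commute_of_star_eq (cdetOn_hermitian hA _).1 (pathProd A k d (Fin.last n))]
  have hsecond : ∑ c ∈ nodupLists (U.erase k), ∑ d ∈ nodupLists (U.erase k \ c.toFinset),
      (-1) ^ (c ++ k :: d).length * (pathProd A k (c ++ k :: d) (Fin.last n) *
        cdetOn A (U \ (c ++ k :: d).toFinset))
      = - ∑ c ∈ nodupLists (U.erase k), ∑ d ∈ nodupLists (U.erase k \ c.toFinset),
        (-1) ^ (c.length + d.length) * (pathProd A k c k * pathProd A k d (Fin.last n) *
          cdetOn A ((U.erase k \ d.toFinset) \ c.toFinset)) := by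
    simp only [← Finset.sum_neg_distrib]
    refine Finset.sum_congr rfl fun c _ => Finset.sum_congr rfl fun d _ => ?_
    rw [sdiff_append_cons, sdiff_right_comm, pathProd_append, List.length_append, List.length_cons, ← add_assoc, pow_succ]
    simp
  rw [hfirst, hsecond, sum_nodupLists_comm (U.erase k), add_neg_cancel, mul_zero]

end DQPaper
end
end

section
/- Let A be an n×n dual quaternion unitary matrix. Then there exist finitely many n×n matrices P₁,…,P_t, each of which is a switching matrix or an addition matrix, such that P_t ⋯ P₁ A = diag(d₁,…,d_n) for some dual quaternions d₁,…,d_n with |d₁ d₂ ⋯ d_n| = 1. -/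
/-!
The dual quaternions form a local ring: an element is a unit exactly when its standard part is
nonzero. Gaussian elimination therefore works on every left-invertible matrix. Once the first
`k` columns are diagonal, left-invertibility forces a unit among the entries of column `k` in
rows `≥ k`; it is switched to the diagonal and used to clear the rest of the column
(`exists_reduced`, with the pivot from `exists_pivot`).

The magnitude of `d₁ ⋯ d_n` is controlled by an ordinary determinant. Left multiplication
embeds the dual quaternions into `4 × 4` matrices over the commutative ring `ℝ[ε]`, conjugation
becoming transposition, so an `n × n` dual quaternion matrix has a multiplicative determinant
`realDet` in `ℝ[ε]` which is invariant under conjugate transposition. Its square is `1` on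
unitary matrices and on switching and addition matrices; the latter holds because an addition
matrix is conjugate to its inverse by a sign change of one coordinate. Hence the square is `1`
on `diag(d₁, …, d_n)`, where it equals `N(d₁ ⋯ d_n) ^ 4` with `N(p) = p p*`. As the standard part
of `N(p)` is nonnegative, `N(p) = 1`, that is, `|p| = 1`.
-/

/-!
Formalization background for "Moore Determinant of Dual Quaternion Hermitian Matrices"
(Cui, Qi, Song, Wang).

A dual quaternion is `q = q_s + q_d ε` with `q_s, q_d` quaternions, `ε² = 0`; it is modeled
by `DualNumber (Quaternion ℝ)`.
-/

open Quaternion Matrix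

noncomputable section

namespace DQPaper

/-! ### Gaussian elimination -/

/-- The monoid generated by the switching matrices and the addition matrices. -/
def elemMonoid (n : ℕ) : Submonoid (Matrix (Fin n) (Fin n) DualQuaternion) :=
  Submonoid.closure {M | (∃ i j, M = switchMatrix i j) ∨ ∃ i j c, i ≠ j ∧ M = addMatrix i j c}

lemma switchMatrix_mem {n : ℕ} (i j : Fin n) : switchMatrix i j ∈ elemMonoid n :=
  Submonoid.subset_closure (Or.inl ⟨i, j, rfl⟩)

lemma addMatrix_mem {n : ℕ} {i j : Fin n} (c : DualQuaternion) (h : i ≠ j) :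
    addMatrix i j c ∈ elemMonoid n :=
  Submonoid.subset_closure (Or.inr ⟨i, j, c, h, rfl⟩)

lemma switchMatrix_mul_apply {R : Type*} [Ring R] {n : ℕ} (i j : Fin n)
    (M : Matrix (Fin n) (Fin n) R) (k l : Fin n) :
    ((switchMatrix i j : Matrix (Fin n) (Fin n) R) * M) k l = M (Equiv.swap i j k) l := by
  rw [Matrix.mul_apply, Finset.sum_eq_single (Equiv.swap i j k)]
  · have : (switchMatrix i j : Matrix (Fin n) (Fin n) R) k (Equiv.swap i j k) = 1 := by
      simp only [switchMatrix, Matrix.of_apply, Equiv.swap_apply_def]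
      grind
    rw [this, one_mul]
  · intro b _ hb
    have : (switchMatrix i j : Matrix (Fin n) (Fin n) R) k b = 0 := by
      simp only [switchMatrix, Matrix.of_apply]
      rw [Equiv.swap_apply_def] at hb
      grind
    rw [this, zero_mul]
  · simp

lemma addMatrix_mul_apply {R : Type*} [Ring R] {n : ℕ} (i j : Fin n) (c : R)
    (M : Matrix (Fin n) (Fin n) R) (k l : Fin n) :
    (addMatrix i j c * M) k l = M k l + if k = j then c * M i l else 0 := by
  rw [Matrix.mul_apply]
  simp only [addMatrix, Matrix.of_apply, add_mul, Finset.sum_add_distrib, ite_mul, one_mul,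
    zero_mul]
  congr 1
  · simp
  · by_cases h : k = j <;> simp [h]

lemma switchMatrix_mul_self {R : Type*} [Ring R] {n : ℕ} (i j : Fin n) :
    (switchMatrix i j * switchMatrix i j : Matrix (Fin n) (Fin n) R) = 1 := by
  rw [← mul_one (switchMatrix i j * switchMatrix i j), mul_assoc]
  ext k l
  rw [switchMatrix_mul_apply, switchMatrix_mul_apply, Equiv.swap_apply_self]

lemma addMatrix_mul_neg {R : Type*} [Ring R] {n : ℕ} {i j : Fin n} (h : i ≠ j) (c : R) :
    (addMatrix i j (-c) * addMatrix i j c : Matrix (Fin n) (Fin n) R) = 1 := by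
  rw [← mul_one (addMatrix i j (-c) * addMatrix i j c), mul_assoc]
  ext k l
  rw [addMatrix_mul_apply, addMatrix_mul_apply, addMatrix_mul_apply]
  by_cases hk : k = j <;> simp [hk, h]

lemma exists_left_inv {n : ℕ} {P : Matrix (Fin n) (Fin n) DualQuaternion}
    (hP : P ∈ elemMonoid n) : ∃ Q, Q * P = 1 := by
  induction hP using Submonoid.closure_induction with
  | mem x hx =>
    rcases hx with ⟨i, j, rfl⟩ | ⟨i, j, c, h, rfl⟩
    · exact ⟨_, switchMatrix_mul_self i j⟩
    · exact ⟨_, addMatrix_mul_neg h c⟩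
  | one => exact ⟨1, mul_one 1⟩
  | mul x y _ _ hx hy =>
    obtain ⟨a, ha⟩ := hx
    obtain ⟨b, hb⟩ := hy
    exact ⟨b * a, by rw [mul_assoc, ← mul_assoc a, ha, one_mul, hb]⟩

lemma isUnit_of_fst {q : DualQuaternion} (h : q.fst ≠ 0) : IsUnit q :=
  TrivSqZeroExt.isUnit_iff_isUnit_fst.2 (isUnit_iff_ne_zero.2 h)

/-- The first `k` columns of `M` vanish off the diagonal. -/
def Reduced {n : ℕ} (k : ℕ) (M : Matrix (Fin n) (Fin n) DualQuaternion) : Prop :=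
  ∀ i j : Fin n, j.val < k → i ≠ j → M i j = 0

/-- A left inverse `B` of `M` vanishes in row `k`, columns `< k`, because the pivots of `M` there
are units. So `(B * M) k k = 1` involves only entries of column `k` of `M` in rows `≥ k`, and
these cannot all have standard part zero. -/
lemma exists_pivot {n : ℕ} {M B : Matrix (Fin n) (Fin n) DualQuaternion} (hB : B * M = 1)
    (k : Fin n) (hM : Reduced k.val M) : ∃ i, k ≤ i ∧ (M i k).fst ≠ 0 := by
  by_contra! hcon
  have hcol : ∀ i l : Fin n, i < k → B l i * M i i = (1 : Matrix (Fin n) (Fin n) _) l i := by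
    intro i l hi
    rw [← hB, Matrix.mul_apply, Finset.sum_eq_single i]
    · intro b _ hb
      rw [hM b i hi hb, mul_zero]
    · simp
  have hz : ∀ i : Fin n, i < k → B k i = 0 := by
    intro i hi
    have h1 := hcol i i hi
    have h2 := hcol i k hi
    rw [Matrix.one_apply_eq] at h1
    rw [Matrix.one_apply_ne hi.ne'] at h2
    have hu : IsUnit (M i i) := by
      apply isUnit_of_fst
      intro h0
      have := congrArg TrivSqZeroExt.fst h1
      simp [h0] at this
    exact hu.mul_left_eq_zero.1 h2
  have hkk := congrFun (congrFun hB k) k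
  rw [Matrix.mul_apply, Matrix.one_apply_eq] at hkk
  have hf := congrArg TrivSqZeroExt.fst hkk
  rw [TrivSqZeroExt.fst_sum, Finset.sum_eq_zero] at hf
  · simp at hf
  · intro i _
    rcases lt_or_ge i k with hi | hi
    · rw [hz i hi, zero_mul, TrivSqZeroExt.fst_zero]
    · rw [TrivSqZeroExt.fst_mul, hcon i hi, mul_zero]

/-- Adding multiples `c i` of row `k` to all rows `i ∈ s` at once. -/
lemma exists_add_rows {n : ℕ} (M : Matrix (Fin n) (Fin n) DualQuaternion) (k : Fin n)
    (c : Fin n → DualQuaternion) (s : Finset (Fin n)) (hs : k ∉ s) :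
    ∃ P ∈ elemMonoid n, ∀ i l, (P * M) i l = M i l + if i ∈ s then c i * M k l else 0 := by
  induction s using Finset.induction_on with
  | empty => exact ⟨1, one_mem _, by simp⟩
  | insert a s ha ih =>
    obtain ⟨P, hP, h⟩ := ih fun h => hs (Finset.mem_insert_of_mem h)
    have hka : k ≠ a := fun h => hs (h ▸ Finset.mem_insert_self _ _)
    have hks : k ∉ s := fun h => hs (Finset.mem_insert_of_mem h)
    refine ⟨addMatrix k a (c a) * P, mul_mem (addMatrix_mem _ hka) hP, fun i l => ?_⟩
    rw [mul_assoc, addMatrix_mul_apply, h, h]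
    by_cases hi : i = a
    · subst hi
      simp [ha, hks]
    · simp [hi]

lemma exists_reduced {n : ℕ} {A : Matrix (Fin n) (Fin n) DualQuaternion}
    (hA : ∃ B, B * A = 1) (k : ℕ) (hk : k ≤ n) :
    ∃ P ∈ elemMonoid n, Reduced k (P * A) := by
  induction k with
  | zero => exact ⟨1, one_mem _, fun _ _ h => absurd h (Nat.not_lt_zero _)⟩
  | succ k ih =>
    obtain ⟨P, hP, hred⟩ := ih (by omega)
    obtain ⟨B, hB⟩ := hA
    obtain ⟨Q, hQ⟩ := exists_left_inv hP
    have hinv : (B * Q) * (P * A) = 1 := by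
      rw [mul_assoc, ← mul_assoc Q, hQ, one_mul, hB]
    let κ : Fin n := ⟨k, hk⟩
    obtain ⟨p, hp, hpu⟩ := exists_pivot hinv κ hred
    set M : Matrix (Fin n) (Fin n) DualQuaternion := switchMatrix κ p * (P * A) with hMdef
    have hM : ∀ i l, M i l = (P * A) (Equiv.swap κ p i) l := switchMatrix_mul_apply κ p _
    have hMred : Reduced k M := by
      intro i j hj hij
      rw [hM]
      apply hred _ _ hj
      -- rows `κ` and `p` both lie at or below `k`, so the switch fixes `j`
      have hjκ : j ≠ κ := fun h => by simp [h, κ] at hj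
      have hjp : j ≠ p := fun h => by
        have : k ≤ p.val := hp
        omega
      intro h
      apply hij
      rw [← Equiv.swap_apply_self κ p i, h, Equiv.swap_apply_of_ne_of_ne hjκ hjp]
    obtain ⟨u, hu⟩ : IsUnit (M κ κ) := by
      rw [hM, Equiv.swap_apply_left]
      exact isUnit_of_fst hpu
    obtain ⟨E, hE, hEM⟩ := exists_add_rows M κ (fun i => -(M i κ * ↑u⁻¹)) (Finset.univ.erase κ)
      (Finset.notMem_erase _ _)
    refine ⟨E * (switchMatrix κ p * P), mul_mem hE (mul_mem (switchMatrix_mem _ _) hP), ?_⟩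
    rw [mul_assoc, mul_assoc, ← hMdef]
    intro i j hj hij
    rw [hEM]
    rcases Nat.lt_succ_iff_lt_or_eq.1 hj with hj | hj
    · have hκj : κ ≠ j := fun h => by simp [← h, κ] at hj
      simp [hMred i j hj hij, hMred κ j hj hκj]
    · have hjκ : j = κ := Fin.ext hj
      subst hjκ
      simp [hij, ← hu, mul_assoc]

/-! ### The determinant of the real representation -/

/-- The coordinates of a dual quaternion with respect to `1, i, j, k`, as dual numbers. -/
def coord (q : DualQuaternion) : Fin 4 → DualNumber ℝ :=
  ![.inl q.fst.re + .inr q.snd.re, .inl q.fst.imI + .inr q.snd.imI,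
    .inl q.fst.imJ + .inr q.snd.imJ, .inl q.fst.imK + .inr q.snd.imK]

lemma coord_star (q : DualQuaternion) :
    coord (star q) = ![coord q 0, -coord q 1, -coord q 2, -coord q 3] := by
  have h1 : (star q).fst = star q.fst := rfl
  have h2 : (star q).snd = star q.snd := rfl
  ext m : 1
  fin_cases m <;> ext <;> simp [coord, h1, h2]

lemma coord_mul (p q : DualQuaternion) :
    coord (p * q) =
      ![coord p 0 * coord q 0 - coord p 1 * coord q 1 - coord p 2 * coord q 2 - coord p 3 * coord q 3,
        coord p 0 * coord q 1 + coord p 1 * coord q 0 + coord p 2 * coord q 3 - coord p 3 * coord q 2,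
        coord p 0 * coord q 2 - coord p 1 * coord q 3 + coord p 2 * coord q 0 + coord p 3 * coord q 1,
        coord p 0 * coord q 3 + coord p 1 * coord q 2 - coord p 2 * coord q 1
          + coord p 3 * coord q 0] := by
  ext m : 1
  fin_cases m <;> ext <;> simp [coord] <;> ring

/-- The matrix, over the dual numbers, of left multiplication by a dual quaternion in the basis
`1, i, j, k`. -/
def leftMat : DualQuaternion →+* Matrix (Fin 4) (Fin 4) (DualNumber ℝ) where
  toFun q :=
    !![coord q 0, -coord q 1, -coord q 2, -coord q 3;
       coord q 1, coord q 0, -coord q 3, coord q 2;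
       coord q 2, coord q 3, coord q 0, -coord q 1;
       coord q 3, -coord q 2, coord q 1, coord q 0]
  map_one' := by
    ext i j : 1
    fin_cases i <;> fin_cases j <;> ext <;> simp [coord]
  map_mul' p q := by
    ext i j : 1
    fin_cases i <;> fin_cases j <;>
      simp [coord_mul, Matrix.mul_apply, Fin.sum_univ_four] <;> ring
  map_zero' := by
    ext i j : 1
    fin_cases i <;> fin_cases j <;> ext <;> simp [coord]
  map_add' p q := by
    ext i j : 1
    fin_cases i <;> fin_cases j <;> ext <;> simp [coord] <;> ring

lemma leftMat_star (q : DualQuaternion) : leftMat (star q) = (leftMat q)ᵀ := by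
  ext i j : 1
  fin_cases i <;> fin_cases j <;> simp [leftMat, coord_star]

/-- The norm `p p* = |p_s|² + 2 Re(p_s* p_d) ε` of a dual quaternion, as a dual number. -/
def dqNorm (p : DualQuaternion) : DualNumber ℝ :=
  coord p 0 ^ 2 + coord p 1 ^ 2 + coord p 2 ^ 2 + coord p 3 ^ 2

lemma det_leftMat_sq (p : DualQuaternion) : (leftMat p).det ^ 2 = dqNorm p ^ 4 := by
  have h : leftMat p * (leftMat p)ᵀ = Matrix.diagonal fun _ => dqNorm p := by
    ext i j : 1
    fin_cases i <;> fin_cases j <;>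
      simp [leftMat, dqNorm, Matrix.mul_apply, Fin.sum_univ_four] <;> ring
  have h2 := congrArg Matrix.det h
  rw [Matrix.det_mul, Matrix.det_transpose, Matrix.det_diagonal] at h2
  simpa [pow_two] using h2

/-- The determinant over the dual numbers of the `4n × 4n` matrix obtained by replacing each
entry of a dual quaternion matrix by the matrix of left multiplication by it. -/
def realDet (n : ℕ) : Matrix (Fin n) (Fin n) DualQuaternion →* DualNumber ℝ :=
  Matrix.detMonoidHom.comp
    ((Matrix.compRingEquiv (Fin n) (Fin 4) (DualNumber ℝ)).toRingHom.comp
      leftMat.mapMatrix).toMonoidHom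

lemma realDet_apply {n : ℕ} (A : Matrix (Fin n) (Fin n) DualQuaternion) :
    realDet n A = (Matrix.comp _ _ _ _ _ (A.map leftMat)).det := rfl

lemma realDet_conjTranspose {n : ℕ} (A : Matrix (Fin n) (Fin n) DualQuaternion) :
    realDet n Aᴴ = realDet n A := by
  rw [realDet_apply, realDet_apply, ← Matrix.det_transpose]
  congr 1
  ext ⟨i, a⟩ ⟨j, b⟩ : 1
  simp [Matrix.comp_apply, Matrix.conjTranspose_apply, leftMat_star]

lemma realDet_diagonal {n : ℕ} (d : Fin n → DualQuaternion) :
    realDet n (Matrix.diagonal d) = (leftMat (List.ofFn d).prod).det := by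
  have h1 : realDet n (Matrix.diagonal d) = ∏ i, (leftMat (d i)).det := by
    rw [realDet_apply, ← Matrix.det_blockDiagonal,
      ← Matrix.det_reindex_self (Equiv.prodComm (Fin n) (Fin 4))]
    congr 1
    ext ⟨a, i⟩ ⟨b, j⟩ : 1
    by_cases h : i = j
    · subst h
      simp [Matrix.comp_apply, Matrix.blockDiagonal_apply]
    · simp [Matrix.comp_apply, Matrix.blockDiagonal_apply, h]
  have h2 : (leftMat (List.ofFn d).prod).det
      = (Matrix.detMonoidHom.comp leftMat.toMonoidHom) (List.ofFn d).prod := rfl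
  rw [h1, h2, map_list_prod, List.map_ofFn, List.prod_ofFn]
  rfl

lemma realDet_sq_of_unitary {n : ℕ} {A : Matrix (Fin n) (Fin n) DualQuaternion}
    (hU : Aᴴ * A = 1) : realDet n A ^ 2 = 1 := by
  have h := congrArg (realDet n) hU
  rwa [map_mul, map_one, realDet_conjTranspose, ← pow_two] at h

/-- Changing the sign of coordinate `j` conjugates `addMatrix i j c` into its inverse
`addMatrix i j (-c)`, so both have the same determinant. -/
lemma realDet_addMatrix_sq {n : ℕ} {i j : Fin n} (h : i ≠ j) (c : DualQuaternion) :
    realDet n (addMatrix i j c) ^ 2 = 1 := by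
  let D : Matrix (Fin n) (Fin n) DualQuaternion := Matrix.diagonal fun l => if l = j then -1 else 1
  have hD : D * D = 1 := by
    rw [Matrix.diagonal_mul_diagonal, ← Matrix.diagonal_one]
    congr 1
    ext l : 1
    split_ifs <;> simp
  have hc : D * addMatrix i j c = addMatrix i j (-c) * D := by
    ext k l : 1
    rw [addMatrix_mul_apply, Matrix.diagonal_mul]
    simp only [addMatrix, Matrix.of_apply, D, Matrix.diagonal_apply]
    by_cases hk : k = j
    · by_cases hl : i = l
      · subst hk hl
        simp [h, h.symm]
      · simp [hk, hl, Ne.symm hl]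
    · simp [hk]
  have h1 := congrArg (realDet n) hD
  have h2 := congrArg (realDet n) hc
  have h3 := congrArg (realDet n) (addMatrix_mul_neg h c)
  simp only [map_mul, map_one] at h1 h2 h3
  have h4 : realDet n (addMatrix i j (-c)) = realDet n (addMatrix i j c) := by
    linear_combination (realDet n (addMatrix i j c) - realDet n (addMatrix i j (-c))) * h1
      - realDet n D * h2
  rw [h4] at h3
  rw [pow_two, h3]

lemma realDet_sq_of_mem {n : ℕ} {P : Matrix (Fin n) (Fin n) DualQuaternion}
    (hP : P ∈ elemMonoid n) : realDet n P ^ 2 = 1 := by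
  induction hP using Submonoid.closure_induction with
  | mem x hx =>
    rcases hx with ⟨i, j, rfl⟩ | ⟨i, j, c, h, rfl⟩
    · rw [← map_pow, pow_two, switchMatrix_mul_self, map_one]
    · exact realDet_addMatrix_sq h c
  | one => simp
  | mul x y _ _ hx hy => rw [map_mul, mul_pow, hx, hy, one_mul]

/-! ### Magnitude one -/

lemma dqNorm_fst (p : DualQuaternion) : (dqNorm p).fst = ‖p.fst‖ ^ 2 := by
  rw [pow_two, ← Quaternion.normSq_eq_norm_mul_self]
  simp [dqNorm, coord, Quaternion.normSq_def']

lemma dqNorm_snd (p : DualQuaternion) :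
    (dqNorm p).snd = (star p.fst * p.snd + star p.snd * p.fst).re := by
  simp [dqNorm, coord, pow_two]
  ring

lemma dqMag_eq_one {p : DualQuaternion} (h : dqNorm p ^ 4 = 1) : dqMag p = 1 := by
  have hf := congrArg TrivSqZeroExt.fst h
  have hs := congrArg TrivSqZeroExt.snd h
  rw [TrivSqZeroExt.fst_pow, TrivSqZeroExt.fst_one, dqNorm_fst, ← pow_mul] at hf
  have hn : ‖p.fst‖ = 1 := (pow_eq_one_iff_of_nonneg (norm_nonneg _) (by norm_num)).1 hf
  rw [TrivSqZeroExt.snd_pow, TrivSqZeroExt.snd_one, dqNorm_fst, hn, dqNorm_snd] at hs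
  have h0 : (star p.fst * p.snd + star p.snd * p.fst).re = 0 := by
    rw [one_pow, one_pow, one_smul] at hs
    exact (smul_eq_zero.1 hs).resolve_left (by norm_num)
  have hne : p.fst ≠ 0 := fun h => by simp [h] at hn
  unfold dqMag
  refine (if_neg hne).trans ?_
  ext
  · exact hn
  · change _ / _ = (0 : ℝ)
    rw [h0, zero_div]

/-- Any dual quaternion unitary matrix `A` can be reduced, by left multiplication with
finitely many switching and addition matrices `P₁, …, P_t`, to a diagonal matrix
`diag(d₁, …, d_n)` with `|d₁ d₂ ⋯ d_n| = 1`. -/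
theorem statement10 {n : ℕ} (A : Matrix (Fin n) (Fin n) DualQuaternion)
    (hU : Aᴴ * A = 1) :
    ∃ (t : ℕ) (P : Fin t → Matrix (Fin n) (Fin n) DualQuaternion)
      (d : Fin n → DualQuaternion),
      (∀ m : Fin t, (∃ i j, P m = switchMatrix i j) ∨
        ∃ i j c, i ≠ j ∧ P m = addMatrix i j c) ∧
      (List.ofFn P).reverse.prod * A = Matrix.diagonal d ∧
      dqMag (List.ofFn d).prod = 1 := by
  obtain ⟨P, hP, hred⟩ := exists_reduced ⟨_, hU⟩ n le_rfl
  have hdiag : P * A = Matrix.diagonal fun i => (P * A) i i := by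
    ext i j : 1
    by_cases h : i = j
    · rw [h, Matrix.diagonal_apply_eq]
    · rw [Matrix.diagonal_apply_ne _ h, hred i j j.isLt h]
  obtain ⟨L, hL, hprod⟩ := Submonoid.exists_list_of_mem_closure hP
  refine ⟨L.reverse.length, L.reverse.get, fun i => (P * A) i i, fun m => ?_, ?_, ?_⟩
  · exact hL _ (List.mem_reverse.1 (List.get_mem _ _))
  · rw [List.ofFn_get, List.reverse_reverse, hprod]
    exact hdiag
  · apply dqMag_eq_one
    rw [← det_leftMat_sq, ← realDet_diagonal, ← hdiag, map_mul, mul_pow, realDet_sq_of_mem hP,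
      realDet_sq_of_unitary hU, one_mul]

end DQPaper
end
end
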